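/- arXiv:1112.5373 — 2 statements merged into one kernel-verified Lean document; each statement's English description precedes it below -/
import Mathlib

section
/- Fix a > 0 and suppose f(t) ≥ 0 for all t ∈ (0,a). Then the image of ξ under τ agrees with η on [0,a]: for every Borel set C ⊆ [0,a], ξ{s ∈ ℝ : τ(s) ∈ C} = η(C). -/
open MeasureTheory

/-- The function `f(t) = ξ[0,t] − η[0,t]` for `t ≥ 0` and `f(t) = η[t,0] − ξ[t,0]` for `t < 0`. -/
noncomputable def fdiff (ξ η : Measure ℝ) (t : ℝ) : ℝ :=
  if 0 ≤ t then (ξ (Set.Icc 0 t)).toReal - (η (Set.Icc 0 t)).toReal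
  else (η (Set.Icc t 0)).toReal - (ξ (Set.Icc t 0)).toReal

/-- `τ(s) = inf {t > s : ξ[s,t] = η[s,t]}`, with values in `(−∞,∞]` (i.e. `EReal`),
`inf ∅ = ∞`. -/
noncomputable def tauE (ξ η : Measure ℝ) (s : ℝ) : EReal :=
  sInf {x : EReal | ∃ t : ℝ, s < t ∧ ξ (Set.Icc s t) = η (Set.Icc s t) ∧ x = (t : EReal)}

/-!
Fix `l ≤ b` such that `f` is minimal over `[l, b]` at `l`, and let `G s` be the minimum of `f` over
`[s, b]`. For `f l ≤ c ≤ f b`, the set `{G ≤ c} ∩ (l, b]` is `(l, x]`, where `x` is the last point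
with `f x = c`. Hence `G` maps `ξ` on `(l, b]` to the image of `η` plus Lebesgue measure on
`(f l, f b]`. Off its countably many plateaus `G` is injective, so singularity forces `η` to live on
the plateaus; these have Lebesgue-null heights, so `ξ` and `η` give them the same mass. Up to
countably many points, the plateaus consist of those `s` for which `f t ≤ f s` for some
`t ∈ (s, b]`. With the roles of `ξ` and `η` exchanged this also shows that `ξ`-almost every `s` has
points `t > s` with `f s ≤ f t` arbitrarily close by, so the intermediate value theorem identifies
the plateaus with `{l ≤ τ ≤ b}` up to a `ξ`-null set. Therefore `ξ {l ≤ τ ≤ b} = η [l, b]`.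
-/

open Set Filter

section RepeatedValues

variable {α β : Type*} [LinearOrder α]

/-- The values taken at least twice, i.e. for monotone `g` the heights of its plateaus. -/
def repeatedValues (g : α → β) : Set β :=
  {c | ∃ x y, x < y ∧ g x = c ∧ g y = c}

lemma injOn_preimage_compl_repeatedValues (g : α → β) :
    InjOn g (g ⁻¹' (repeatedValues g)ᶜ) := by
  intro x hx y hy hxy
  by_contra hne
  rcases lt_or_gt_of_ne hne with hlt | hlt
  · exact hx ⟨x, y, hlt, rfl, hxy.symm⟩
  · exact hy ⟨y, x, hlt, rfl, hxy⟩

end RepeatedValues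

lemma exists_mem_Ioc_eq_iff {α β : Type*} [ConditionallyCompleteLinearOrder α]
    [TopologicalSpace α] [OrderTopology α] [DenselyOrdered α] [LinearOrder β] [TopologicalSpace β]
    [OrderClosedTopology β] {f : α → β} {b s : α} (hf : Continuous f) :
    (∃ t ∈ Ioc s b, f t = f s) ↔ (∃ t ∈ Ioc s b, f t ≤ f s) ∧ ∃ t ∈ Ioc s b, f s ≤ f t := by
  constructor
  · rintro ⟨t, ht, hts⟩
    exact ⟨⟨t, ht, hts.le⟩, t, ht, hts.ge⟩
  · rintro ⟨⟨t, ht, hts⟩, r, hr, hrs⟩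
    exact isPreconnected_Ioc.intermediate_value ht hr hf.continuousOn ⟨hts, hrs⟩

lemma measurableSet_setOf_exists_mem_Ioc_le {α β : Type*} [LinearOrder α] [TopologicalSpace α]
    [OrderTopology α] [TopologicalSpace.SeparableSpace α] [DenselyOrdered α] [MeasurableSpace α]
    [BorelSpace α] [LinearOrder β] [TopologicalSpace β] [OrderClosedTopology β]
    [MeasurableSpace β] [BorelSpace β] {f : α → β} (hf : Measurable f) (b : α) :
    MeasurableSet {s | ∃ t ∈ Ioc s b, f t ≤ f s} := by
  obtain ⟨D, hDc, hD⟩ := TopologicalSpace.exists_countable_dense α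
  have hunion : {s | ∃ t ∈ Ioc s b, f t ≤ f s} =
      ⋃ q ∈ D, Iio q ∩ f ⁻¹' {c | ∃ t ∈ Icc q b, f t ≤ c} := by
    ext s
    simp only [mem_ofPred_eq, mem_iUnion, mem_inter_iff, mem_Iio, mem_preimage, exists_prop]
    constructor
    · rintro ⟨t, ht, hts⟩
      obtain ⟨q, hqD, hsq, hqt⟩ := hD.exists_between ht.1
      exact ⟨q, hqD, hsq, t, ⟨hqt.le, ht.2⟩, hts⟩
    · rintro ⟨q, -, hsq, t, ht, hts⟩
      exact ⟨t, ⟨hsq.trans_le ht.1, ht.2⟩, hts⟩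
  have hupper (q : α) : IsUpperSet {c | ∃ t ∈ Icc q b, f t ≤ c} :=
    fun c d hcd ⟨t, ht, htc⟩ => ⟨t, ht, htc.trans hcd⟩
  rw [hunion]
  exact .biUnion hDc fun q _ => measurableSet_Iio.inter (hf (hupper q).ordConnected.measurableSet)

section FutureMin

variable {α β : Type*} [ConditionallyCompleteLinearOrder α] [TopologicalSpace α] [OrderTopology α]
  [ConditionallyCompleteLinearOrder β] [TopologicalSpace β] [OrderClosedTopology β]
  {f : α → β} {b l s : α} {c : β}

/-- The running minimum from the right: the minimum of `f` over `[s, b]` if `s ≤ b`. It is `f b`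
for `s > b`, so that it is monotone everywhere. -/
noncomputable def futureMin (f : α → β) (b s : α) : β :=
  sInf (f '' Icc (min s b) b)

lemma futureMin_le_iff (hf : Continuous f) (hs : s ≤ b) :
    futureMin f b s ≤ c ↔ ∃ t ∈ Icc s b, f t ≤ c := by
  rw [futureMin, min_eq_left hs]
  constructor
  · obtain ⟨t, ht, hmin⟩ := isCompact_Icc.exists_sInf_image_eq (nonempty_Icc.2 hs) hf.continuousOn
    exact fun hc => ⟨t, ht, hmin ▸ hc⟩
  · rintro ⟨t, ht, htc⟩
    exact (csInf_le (isCompact_Icc.image hf).bddBelow (mem_image_of_mem f ht)).trans htc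

lemma monotone_futureMin (hf : Continuous f) : Monotone (futureMin f b) := fun _ t hst =>
  csInf_le_csInf (isCompact_Icc.image hf).bddBelow
    ((nonempty_Icc.2 (min_le_right t b)).image f)
    (image_mono (Icc_subset_Icc_left (min_le_min_right b hst)))

lemma strictMonoOn_futureMin (hf : Continuous f) :
    StrictMonoOn (futureMin f b) {s | s ≤ b ∧ ∀ t ∈ Ioc s b, f s < f t} := by
  rintro s ⟨hsb, hs⟩ t ⟨htb, -⟩ hst
  obtain ⟨r, hr, hrt⟩ := (futureMin_le_iff hf htb).1 le_rfl
  calc futureMin f b s ≤ f s := (futureMin_le_iff hf hsb).2 ⟨s, left_mem_Icc.2 hsb, le_rfl⟩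
    _ < f r := hs r ⟨hst.trans_le hr.1, hr.2⟩
    _ ≤ futureMin f b t := hrt

lemma futureMin_mem_repeatedValues (hf : Continuous f) (hs : ∃ t ∈ Ioc s b, f t ≤ f s) :
    futureMin f b s ∈ repeatedValues (futureMin f b) := by
  obtain ⟨t, ht, hts⟩ := hs
  obtain ⟨m, hm, hms⟩ := (futureMin_le_iff hf (ht.1.le.trans ht.2)).1 (le_refl (futureMin f b s))
  obtain ⟨r, hr, hrs⟩ : ∃ r ∈ Ioc s b, f r ≤ futureMin f b s := by
    rcases hm.1.eq_or_lt with rfl | hsm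
    · exact ⟨t, ht, hts.trans hms⟩
    · exact ⟨m, ⟨hsm, hm.2⟩, hms⟩
  exact ⟨s, r, hr.1, rfl, le_antisymm
    ((futureMin_le_iff hf hr.2).2 ⟨r, left_mem_Icc.2 hr.2, hrs⟩)
    (monotone_futureMin hf hr.1.le)⟩

lemma ae_futureMin_mem_repeatedValues_iff [SecondCountableTopology α] [MeasurableSpace α]
    (μ : Measure α) [NullSingletonClass μ] (hf : Continuous f) (b : α) :
    ∀ᵐ s ∂μ, s ≤ b →
      (futureMin f b s ∈ repeatedValues (futureMin f b) ↔ ∃ t ∈ Ioc s b, f t ≤ f s) := by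
  have hcount : ({s | s ≤ b ∧ ∀ t ∈ Ioc s b, f s < f t} ∩
      futureMin f b ⁻¹' repeatedValues (futureMin f b)).Countable :=
    MapsTo.countable_of_injOn (f := futureMin f b) (fun _ hs => hs.2)
      ((strictMonoOn_futureMin hf).injOn.mono inter_subset_left)
      (monotone_futureMin hf).countable_setOfPred_two_preimages
  filter_upwards [hcount.ae_notMem μ] with s hs hsb
  refine ⟨fun hmem => ?_, futureMin_mem_repeatedValues hf⟩
  by_contra! hlt
  exact hs ⟨⟨hsb, hlt⟩, hmem⟩

variable [DenselyOrdered α]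

lemma exists_futureMin_le_iff_le (hf : Continuous f) (hlb : l ≤ b) (hc : c ∈ Icc (f l) (f b)) :
    ∃ x ∈ Icc l b, f x = c ∧ ∀ s ∈ Icc l b, futureMin f b s ≤ c ↔ s ≤ x := by
  obtain ⟨x, ⟨hx, hxc⟩, hlast⟩ :=
    (isCompact_Icc.inter_right (isClosed_Iic.preimage hf)).exists_isGreatest
      ⟨l, left_mem_Icc.2 hlb, hc.1⟩
  refine ⟨x, hx, ?_, fun s hs => ?_⟩
  · obtain ⟨y, hy, hyc⟩ := intermediate_value_Icc hx.2 hf.continuousOn ⟨hxc, hc.2⟩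
    have hyx : y ≤ x := hlast ⟨⟨hx.1.trans hy.1, hy.2⟩, hyc.le⟩
    rw [← hyc, le_antisymm hyx hy.1]
  · rw [futureMin_le_iff hf hs.2]
    constructor
    · rintro ⟨t, ht, htc⟩
      exact ht.1.trans (hlast ⟨⟨hs.1.trans ht.1, ht.2⟩, htc⟩)
    · exact fun hsx => ⟨x, ⟨hsx, hx.2⟩, hxc⟩

lemma exists_preimage_futureMin_Iic_eq (hf : Continuous f) (hlb : l ≤ b)
    (hmin : IsMinOn f (Icc l b) l) (c : β) :
    ∃ x ∈ Icc l b, f x = max (f l) (min (f b) c) ∧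
      futureMin f b ⁻¹' Iic c ∩ Ioc l b = Ioc l x := by
  have hflb : f l ≤ f b := hmin (right_mem_Icc.2 hlb)
  rcases lt_or_ge c (f l) with hcl | hlc
  · refine ⟨l, left_mem_Icc.2 hlb, ?_, ?_⟩
    · rw [max_eq_left ((min_le_right _ _).trans hcl.le)]
    · rw [Ioc_self, eq_empty_iff_forall_notMem]
      rintro s ⟨hsc, hs⟩
      obtain ⟨t, ht, htc⟩ := (futureMin_le_iff hf hs.2).1 hsc
      exact (htc.trans_lt hcl).not_ge (hmin ⟨hs.1.le.trans ht.1, ht.2⟩)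
  · obtain ⟨x, hx, hfx, hlevel⟩ :=
      exists_futureMin_le_iff_le hf hlb ⟨le_min hflb hlc, min_le_left (f b) c⟩
    refine ⟨x, hx, by rw [hfx, max_eq_right (le_min hflb hlc)], Set.ext fun s => ?_⟩
    simp only [mem_inter_iff, mem_preimage, mem_Iic, mem_Ioc]
    have hle (hsb : s ≤ b) : futureMin f b s ≤ f b :=
      (futureMin_le_iff hf hsb).2 ⟨b, right_mem_Icc.2 hsb, le_rfl⟩
    constructor
    · rintro ⟨hsc, hls, hsb⟩
      exact ⟨hls, (hlevel s ⟨hls.le, hsb⟩).1 (le_min (hle hsb) hsc)⟩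
    · rintro ⟨hls, hsx⟩
      have hsb := hsx.trans hx.2
      exact ⟨((hlevel s ⟨hls.le, hsb⟩).2 hsx).trans (min_le_right _ _), hls, hsb⟩

end FutureMin

lemma measure_preimage_eq_zero_of_map_le_map {α β : Type*} [MeasurableSpace α]
    [StandardBorelSpace α] [MeasurableSpace β] [MeasurableSpace.CountablySeparated β]
    {μ ν : Measure α} {g : α → β} {T : Set β} (hsing : μ.MutuallySingular ν) (hg : Measurable g)
    (hT : MeasurableSet T) (hinj : InjOn g (g ⁻¹' T)) (hle : ν.map g ≤ μ.map g) :
    ν (g ⁻¹' T) = 0 := by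
  obtain ⟨A, hA, hμA, hνA⟩ := hsing
  have himage : MeasurableSet (g '' (g ⁻¹' T ∩ A)) :=
    ((hg hT).inter hA).image_of_measurable_injOn hg (hinj.mono inter_subset_left)
  have hsaturated : g ⁻¹' (g '' (g ⁻¹' T ∩ A)) ⊆ A := by
    rintro x ⟨y, ⟨hyT, hyA⟩, hyx⟩
    have hxT : g x ∈ T := hyx ▸ hyT
    exact hinj hyT hxT hyx ▸ hyA
  have hνTA : ν (g ⁻¹' T ∩ A) = 0 := by
    refine le_antisymm ?_ zero_le
    calc ν (g ⁻¹' T ∩ A) ≤ ν.map g (g '' (g ⁻¹' T ∩ A)) := by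
          rw [Measure.map_apply hg himage]
          exact measure_mono (subset_preimage_image g _)
      _ ≤ μ.map g (g '' (g ⁻¹' T ∩ A)) := hle _
      _ ≤ μ A := by
          rw [Measure.map_apply hg himage]
          exact measure_mono hsaturated
      _ = 0 := hμA
  rw [← measure_inter_add_sdiff (g ⁻¹' T) hA, hνTA, zero_add]
  exact measure_mono_null (fun x hx => hx.2) hνA

section Fdiff

variable {ξ η : Measure ℝ}

lemma fdiff_swap (ξ η : Measure ℝ) : fdiff η ξ = -fdiff ξ η := by
  ext t
  simp only [fdiff, Pi.neg_apply]
  split_ifs <;> ring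

variable [NullSingletonClass ξ] [NullSingletonClass η]

lemma fdiff_eq_integral_sub_integral (t : ℝ) :
    fdiff ξ η t = (∫ _ in (0 : ℝ)..t, (1 : ℝ) ∂ξ) - ∫ _ in (0 : ℝ)..t, (1 : ℝ) ∂η := by
  simp only [fdiff, ← measureReal_def, ← measureReal_congr Ioc_ae_eq_Icc,
    intervalIntegral.integral_const', smul_eq_mul, mul_one]
  split_ifs with ht
  · simp [Ioc_eq_empty_of_le ht]
  · simp only [Ioc_eq_empty_of_le (not_le.1 ht).le, measureReal_empty]
    ring

variable [IsLocallyFiniteMeasure ξ] [IsLocallyFiniteMeasure η] {u v : ℝ}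

variable (ξ η) in
lemma continuous_fdiff : Continuous (fdiff ξ η) := by
  rw [funext fdiff_eq_integral_sub_integral]
  exact (intervalIntegral.continuous_primitive (fun _ _ => intervalIntegrable_const) 0).sub
    (intervalIntegral.continuous_primitive (fun _ _ => intervalIntegrable_const) 0)

lemma fdiff_sub_fdiff (huv : u ≤ v) :
    fdiff ξ η v - fdiff ξ η u = ξ.real (Ioc u v) - η.real (Ioc u v) := by
  have hsub (μ : Measure ℝ) [IsLocallyFiniteMeasure μ] :
      (∫ _ in (0 : ℝ)..v, (1 : ℝ) ∂μ) - ∫ _ in (0 : ℝ)..u, (1 : ℝ) ∂μ = μ.real (Ioc u v) := by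
    rw [intervalIntegral.integral_interval_sub_left intervalIntegrable_const
      intervalIntegrable_const, intervalIntegral.integral_of_le huv, setIntegral_one_eq_measureReal]
  rw [fdiff_eq_integral_sub_integral, fdiff_eq_integral_sub_integral, ← hsub ξ, ← hsub η]
  ring

lemma measure_Ioc_eq_add_ofReal_fdiff_sub (huv : u ≤ v) (hle : fdiff ξ η u ≤ fdiff ξ η v) :
    ξ (Ioc u v) = η (Ioc u v) + ENNReal.ofReal (fdiff ξ η v - fdiff ξ η u) := by
  rw [← ofReal_measureReal (μ := ξ) measure_Ioc_lt_top.ne,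
    ← ofReal_measureReal (μ := η) measure_Ioc_lt_top.ne,
    ← ENNReal.ofReal_add measureReal_nonneg (sub_nonneg.2 hle), fdiff_sub_fdiff huv,
    add_sub_cancel]

lemma measure_Icc_eq_measure_Icc_iff_fdiff_eq (huv : u ≤ v) :
    ξ (Icc u v) = η (Icc u v) ↔ fdiff ξ η v = fdiff ξ η u := by
  rw [← measure_congr (Ioc_ae_eq_Icc (μ := ξ)), ← measure_congr (Ioc_ae_eq_Icc (μ := η)),
    ← measureReal_eq_measureReal_iff measure_Ioc_lt_top.ne measure_Ioc_lt_top.ne,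
    ← sub_eq_zero, ← fdiff_sub_fdiff huv, sub_eq_zero]

end Fdiff

section Singular

variable {ξ η : Measure ℝ} [IsLocallyFiniteMeasure ξ] [NullSingletonClass ξ]
  [IsLocallyFiniteMeasure η] [NullSingletonClass η] {b l : ℝ}

lemma map_futureMin_fdiff (hlb : l ≤ b) (hmin : IsMinOn (fdiff ξ η) (Icc l b) l) :
    (ξ.restrict (Ioc l b)).map (futureMin (fdiff ξ η) b) =
      (η.restrict (Ioc l b)).map (futureMin (fdiff ξ η) b) +
        volume.restrict (Ioc (fdiff ξ η l) (fdiff ξ η b)) := by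
  have hmeas : Measurable (futureMin (fdiff ξ η) b) :=
    (monotone_futureMin (continuous_fdiff ξ η)).measurable
  have : IsFiniteMeasure (ξ.restrict (Ioc l b)) := isFiniteMeasure_restrict.2 measure_Ioc_lt_top.ne
  refine Measure.ext_of_Iic _ _ fun c => ?_
  obtain ⟨x, hx, hfx, hpre⟩ := exists_preimage_futureMin_Iic_eq (continuous_fdiff ξ η) hlb hmin c
  have hvolume : volume (Iic c ∩ Ioc (fdiff ξ η l) (fdiff ξ η b)) =
      ENNReal.ofReal (fdiff ξ η x - fdiff ξ η l) := by
    rw [inter_comm, Ioc_inter_Iic, Real.volume_Ioc, hfx, ← max_sub_sub_right, sub_self,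
      ENNReal.ofReal_max, ENNReal.ofReal_zero, max_eq_right zero_le]
  rw [Measure.add_apply, Measure.map_apply hmeas measurableSet_Iic,
    Measure.map_apply hmeas measurableSet_Iic, Measure.restrict_apply (hmeas measurableSet_Iic),
    Measure.restrict_apply (hmeas measurableSet_Iic), Measure.restrict_apply measurableSet_Iic,
    hpre, hvolume]
  exact measure_Ioc_eq_add_ofReal_fdiff_sub hx.1 (hmin hx)

lemma ae_restrict_futureMin_mem_repeatedValues (hsing : ξ.MutuallySingular η) (hlb : l ≤ b)
    (hmin : IsMinOn (fdiff ξ η) (Icc l b) l) :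
    ∀ᵐ s ∂η.restrict (Ioc l b),
      futureMin (fdiff ξ η) b s ∈ repeatedValues (futureMin (fdiff ξ η) b) := by
  have hmono : Monotone (futureMin (fdiff ξ η) b) := monotone_futureMin (continuous_fdiff ξ η)
  refine measure_preimage_eq_zero_of_map_le_map (μ := ξ.restrict (Ioc l b))
    (hsing.mono Measure.restrict_le_self Measure.restrict_le_self) hmono.measurable
    hmono.countable_setOfPred_two_preimages.measurableSet.compl
    (injOn_preimage_compl_repeatedValues _) ?_
  rw [map_futureMin_fdiff hlb hmin]
  exact Measure.le_add_right le_rfl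

lemma measure_setOf_exists_fdiff_le (hsing : ξ.MutuallySingular η) (hlb : l ≤ b)
    (hmin : IsMinOn (fdiff ξ η) (Icc l b) l) :
    ξ {s | s ∈ Ioc l b ∧ ∃ t ∈ Ioc s b, fdiff ξ η t ≤ fdiff ξ η s} = η (Ioc l b) := by
  set G := futureMin (fdiff ξ η) b
  have hmono : Monotone G := monotone_futureMin (continuous_fdiff ξ η)
  have hcount : (repeatedValues G).Countable := hmono.countable_setOfPred_two_preimages
  have hmeas : MeasurableSet (G ⁻¹' repeatedValues G) := hmono.measurable hcount.measurableSet
  calc ξ {s | s ∈ Ioc l b ∧ ∃ t ∈ Ioc s b, fdiff ξ η t ≤ fdiff ξ η s}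
      = ξ (G ⁻¹' repeatedValues G ∩ Ioc l b) := by
        refine measure_congr (eventuallyEq_set.2 ?_)
        filter_upwards [ae_futureMin_mem_repeatedValues_iff ξ (continuous_fdiff ξ η) b] with s hs
        rw [inter_comm]
        exact and_congr_right fun hsI => (hs hsI.2).symm
    _ = (ξ.restrict (Ioc l b)).map G (repeatedValues G) := by
        rw [Measure.map_apply hmono.measurable hcount.measurableSet, Measure.restrict_apply hmeas]
    _ = (η.restrict (Ioc l b)).map G (repeatedValues G) := by
        rw [map_futureMin_fdiff hlb hmin, Measure.add_apply,
          hcount.measure_zero (volume.restrict _), add_zero]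
    _ = η.restrict (Ioc l b) univ := by
        rw [Measure.map_apply hmono.measurable hcount.measurableSet]
        exact measure_congr
          (eventuallyEq_univ.2 (ae_restrict_futureMin_mem_repeatedValues hsing hlb hmin))
    _ = η (Ioc l b) := Measure.restrict_apply_univ _

lemma ae_restrict_exists_fdiff_le (hsing : ξ.MutuallySingular η) (hlb : l ≤ b)
    (hmin : IsMinOn (fdiff ξ η) (Icc l b) l) :
    ∀ᵐ s ∂η, s ∈ Ioc l b → ∃ t ∈ Ioc s b, fdiff ξ η t ≤ fdiff ξ η s := by
  filter_upwards [ae_imp_of_ae_restrict (ae_restrict_futureMin_mem_repeatedValues hsing hlb hmin),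
    ae_futureMin_mem_repeatedValues_iff η (continuous_fdiff ξ η) b] with s hmem hiff hs
  exact (hiff hs.2).1 (hmem hs)

lemma ae_exists_fdiff_le_of_mem_Ico (hsing : ξ.MutuallySingular η) (l b : ℝ) :
    ∀ᵐ s ∂η, s ∈ Ico l b → ∃ t ∈ Ioc s b, fdiff ξ η t ≤ fdiff ξ η s := by
  rcases lt_or_ge b l with hbl | hlb
  · simp [Ico_eq_empty_of_le hbl.le]
  obtain ⟨m, hm, hmin⟩ := isCompact_Icc.exists_isMinOn (nonempty_Icc.2 hlb)
    (continuous_fdiff ξ η).continuousOn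
  filter_upwards [ae_restrict_exists_fdiff_le hsing hm.2
    (hmin.on_subset (Icc_subset_Icc_left hm.1)), Measure.ae_ne η m] with s hs hsm hslb
  rcases lt_or_gt_of_ne hsm with hlt | hgt
  · exact ⟨m, ⟨hlt, hm.2⟩, hmin ⟨hslb.1, hslb.2.le⟩⟩
  · exact hs ⟨hgt, hslb.2.le⟩

lemma ae_forall_exists_fdiff_le (hsing : ξ.MutuallySingular η) :
    ∀ᵐ s ∂η, ∀ b > s, ∃ t ∈ Ioc s b, fdiff ξ η t ≤ fdiff ξ η s := by
  have hrat : ∀ᵐ s ∂η, ∀ p q : ℚ, s ∈ Ico (p : ℝ) q →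
      ∃ t ∈ Ioc s (q : ℝ), fdiff ξ η t ≤ fdiff ξ η s :=
    ae_all_iff.2 fun p => ae_all_iff.2 fun q => ae_exists_fdiff_le_of_mem_Ico hsing p q
  filter_upwards [hrat] with s hs b hsb
  obtain ⟨p, hps⟩ := exists_rat_lt s
  obtain ⟨q, hsq, hqb⟩ := exists_rat_btwn hsb
  obtain ⟨t, ht, hts⟩ := hs p q ⟨hps.le, hsq⟩
  exact ⟨t, ⟨ht.1, ht.2.trans hqb.le⟩, hts⟩

lemma ae_forall_exists_fdiff_ge (hsing : ξ.MutuallySingular η) :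
    ∀ᵐ s ∂ξ, ∀ b > s, ∃ t ∈ Ioc s b, fdiff ξ η s ≤ fdiff ξ η t := by
  simpa only [fdiff_swap ξ η, Pi.neg_apply, neg_le_neg_iff] using
    ae_forall_exists_fdiff_le hsing.symm

end Singular

section Tau

variable {ξ η : Measure ℝ}

lemma coe_le_tauE (s : ℝ) : (s : EReal) ≤ tauE ξ η s := by
  refine le_sInf ?_
  rintro _ ⟨t, hst, -, rfl⟩
  exact EReal.coe_le_coe_iff.2 hst.le

variable [IsLocallyFiniteMeasure ξ] [NullSingletonClass ξ]
  [IsLocallyFiniteMeasure η] [NullSingletonClass η] {a b l s : ℝ}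

lemma tauE_lt_iff {x : EReal} :
    tauE ξ η s < x ↔ ∃ t, s < t ∧ fdiff ξ η t = fdiff ξ η s ∧ (t : EReal) < x := by
  rw [tauE, sInf_lt_iff]
  constructor
  · rintro ⟨_, ⟨t, hst, heq, rfl⟩, htx⟩
    exact ⟨t, hst, (measure_Icc_eq_measure_Icc_iff_fdiff_eq hst.le).1 heq, htx⟩
  · rintro ⟨t, hst, heq, htx⟩
    exact ⟨t, ⟨t, hst, (measure_Icc_eq_measure_Icc_iff_fdiff_eq hst.le).2 heq, rfl⟩, htx⟩

lemma tauE_le_coe_iff (hsb : s < b) :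
    tauE ξ η s ≤ b ↔ ∃ t ∈ Ioc s b, fdiff ξ η t = fdiff ξ η s := by
  constructor
  · intro hτ
    by_contra! hne
    obtain ⟨u, hbu, hu⟩ := exists_Ico_subset_of_mem_nhds
      ((continuous_fdiff ξ η).continuousAt.eventually_ne (hne b (right_mem_Ioc.2 hsb)))
      (exists_gt b)
    obtain ⟨t, hst, heq, htu⟩ := tauE_lt_iff.1 (hτ.trans_lt (EReal.coe_lt_coe_iff.2 hbu))
    have hbt : b < t := not_le.1 fun htb => hne t ⟨hst, htb⟩ heq
    exact hu ⟨hbt.le, EReal.coe_lt_coe_iff.1 htu⟩ heq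
  · rintro ⟨t, ht, heq⟩
    exact sInf_le_of_le
      ⟨t, ht.1, (measure_Icc_eq_measure_Icc_iff_fdiff_eq ht.1.le).2 heq, rfl⟩
      (EReal.coe_le_coe_iff.2 ht.2)

lemma fdiff_eq_of_tauE_eq (hsb : s < b) (hτ : tauE ξ η s = b) : fdiff ξ η b = fdiff ξ η s := by
  obtain ⟨t, ht, heq⟩ := (tauE_le_coe_iff hsb).1 hτ.le
  have hbt : (b : EReal) ≤ t := hτ ▸ (tauE_le_coe_iff ht.1).2 ⟨t, right_mem_Ioc.2 ht.1, heq⟩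
  rwa [← le_antisymm ht.2 (EReal.coe_le_coe_iff.1 hbt)]

lemma subsingleton_setOf_tauE_eq (c : ℝ) : {s | s < c ∧ tauE ξ η s = c}.Subsingleton := by
  have hnot {s t : ℝ} (hst : s < t) (htc : t < c) (hs : tauE ξ η s = c) : tauE ξ η t ≠ c := by
    intro ht
    have heq : fdiff ξ η t = fdiff ξ η s :=
      (fdiff_eq_of_tauE_eq htc ht).symm.trans (fdiff_eq_of_tauE_eq (hst.trans htc) hs)
    exact (tauE_lt_iff.2 ⟨t, hst, heq, EReal.coe_lt_coe_iff.2 htc⟩).ne hs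
  rintro s ⟨hsc, hs⟩ t ⟨htc, ht⟩
  by_contra hne
  rcases lt_or_gt_of_ne hne with hst | hts
  · exact hnot hst htc hs ht
  · exact hnot hts hsc ht hs

lemma measurable_tauE : Measurable (tauE ξ η) := by
  have hge (q : ℝ) : MeasurableSet {s | ∃ t ∈ Ioc s q, fdiff ξ η s ≤ fdiff ξ η t} := by
    simpa only [fdiff_swap ξ η, Pi.neg_apply, neg_le_neg_iff] using
      measurableSet_setOf_exists_mem_Ioc_le (continuous_fdiff η ξ).measurable q
  have heq (q : ℝ) : MeasurableSet {s | ∃ t ∈ Ioc s q, fdiff ξ η t = fdiff ξ η s} := by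
    simp only [exists_mem_Ioc_eq_iff (continuous_fdiff ξ η)]
    exact (measurableSet_setOf_exists_mem_Ioc_le (continuous_fdiff ξ η).measurable q).inter (hge q)
  refine measurable_of_Iio fun x => ?_
  have hunion : tauE ξ η ⁻¹' Iio x = ⋃ q ∈ {q : ℚ | ((q : ℝ) : EReal) < x},
      {s | ∃ t ∈ Ioc s (q : ℝ), fdiff ξ η t = fdiff ξ η s} := by
    ext s
    simp only [mem_preimage, mem_Iio, mem_iUnion, mem_ofPred_eq, exists_prop, tauE_lt_iff]
    constructor
    · rintro ⟨t, hst, hts, htx⟩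
      obtain ⟨q, htq, hqx⟩ := EReal.exists_rat_btwn_of_lt htx
      exact ⟨q, hqx, t, ⟨hst, (EReal.coe_lt_coe_iff.1 htq).le⟩, hts⟩
    · rintro ⟨q, hqx, t, ht, hts⟩
      exact ⟨t, ht.1, hts, (EReal.coe_le_coe_iff.2 ht.2).trans_lt hqx⟩
  rw [hunion]
  exact .biUnion (to_countable _) fun q _ => heq q

lemma ae_tauE_mem_Icc_iff (hsing : ξ.MutuallySingular η)
    (hmin : IsMinOn (fdiff ξ η) (Icc l b) l) :
    ∀ᵐ s ∂ξ, tauE ξ η s ∈ Icc (l : EReal) b ↔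
      s ∈ Ioc l b ∧ ∃ t ∈ Ioc s b, fdiff ξ η t ≤ fdiff ξ η s := by
  filter_upwards [ae_forall_exists_fdiff_ge hsing, Measure.ae_ne ξ l, Measure.ae_ne ξ b,
    (subsingleton_setOf_tauE_eq (ξ := ξ) (η := η) l).countable.ae_notMem ξ]
    with s hge hs_ne_l hs_ne_b hτl
  constructor
  · rintro ⟨hlτ, hτb⟩
    have hsb : s < b := (EReal.coe_le_coe_iff.1 ((coe_le_tauE s).trans hτb)).lt_of_ne hs_ne_b
    obtain ⟨t, ht, heq⟩ := (tauE_le_coe_iff hsb).1 hτb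
    have hls : l < s := by
      refine hs_ne_l.lt_or_gt.resolve_left fun hsl => hτl ⟨hsl, hlτ.antisymm' ?_⟩
      rw [tauE_le_coe_iff hsl]
      rcases le_or_gt t l with htl | hlt
      · exact ⟨t, ⟨ht.1, htl⟩, heq⟩
      · have hfl : fdiff ξ η l ≤ fdiff ξ η s := heq ▸ hmin ⟨hlt.le, ht.2⟩
        exact (exists_mem_Ioc_eq_iff (continuous_fdiff ξ η)).2
          ⟨⟨l, right_mem_Ioc.2 hsl, hfl⟩, hge l hsl⟩
    exact ⟨⟨hls, hsb.le⟩, t, ht, heq.le⟩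
  · rintro ⟨hs, hle⟩
    have hsb : s < b := hs.2.lt_of_ne hs_ne_b
    exact ⟨(EReal.coe_le_coe_iff.2 hs.1.le).trans (coe_le_tauE s),
      (tauE_le_coe_iff hsb).2 ((exists_mem_Ioc_eq_iff (continuous_fdiff ξ η)).2 ⟨hle, hge b hsb⟩)⟩

lemma measure_preimage_tauE_Icc (hsing : ξ.MutuallySingular η) (hlb : l ≤ b)
    (hmin : IsMinOn (fdiff ξ η) (Icc l b) l) :
    ξ (tauE ξ η ⁻¹' Icc (l : EReal) b) = η (Icc l b) := by
  calc ξ (tauE ξ η ⁻¹' Icc (l : EReal) b)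
      = ξ {s | s ∈ Ioc l b ∧ ∃ t ∈ Ioc s b, fdiff ξ η t ≤ fdiff ξ η s} :=
        measure_congr (eventuallyEq_set.2 (ae_tauE_mem_Icc_iff hsing hmin))
    _ = η (Ioc l b) := measure_setOf_exists_fdiff_le hsing hlb hmin
    _ = η (Icc l b) := measure_congr Ioc_ae_eq_Icc

lemma map_tauE_restrict_Icc (hsing : ξ.MutuallySingular η) (hla : l ≤ a)
    (hmin : IsMinOn (fdiff ξ η) (Icc l a) l) :
    (ξ.map (tauE ξ η)).restrict (Icc (l : EReal) a) =
      (η.map Real.toEReal).restrict (Icc (l : EReal) a) := by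
  have hξ {b : ℝ} (hb : b ∈ Icc l a) : ξ.map (tauE ξ η) (Icc (l : EReal) b) = η (Icc l b) := by
    rw [Measure.map_apply measurable_tauE measurableSet_Icc]
    exact measure_preimage_tauE_Icc hsing hb.1 (hmin.on_subset (Icc_subset_Icc_right hb.2))
  have hη (b : ℝ) : η.map Real.toEReal (Icc (l : EReal) b) = η (Icc l b) := by
    rw [Measure.map_apply measurable_coe_real_ereal measurableSet_Icc, EReal.preimage_coe_Icc]
  have : IsFiniteMeasure ((ξ.map (tauE ξ η)).restrict (Icc (l : EReal) a)) :=
    isFiniteMeasure_restrict.2 (hξ (right_mem_Icc.2 hla) ▸ measure_Icc_lt_top.ne)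
  refine Measure.ext_of_Iic _ _ fun c => ?_
  have hinter : Iic c ∩ Icc (l : EReal) a = Icc (l : EReal) (min c a) := by
    rw [← Ici_inter_Iic, ← Ici_inter_Iic, ← Iic_inter_Iic, inter_left_comm]
  rw [Measure.restrict_apply measurableSet_Iic, Measure.restrict_apply measurableSet_Iic, hinter]
  rcases lt_or_ge (min c a) (l : EReal) with hcl | hlc
  · rw [Icc_eq_empty hcl.not_ge, measure_empty, measure_empty]
  · lift min c (a : EReal) to ℝ using
      ⟨((min_le_right _ _).trans_lt (EReal.coe_lt_top a)).ne,
        ((EReal.bot_lt_coe l).trans_le hlc).ne'⟩ with b hb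
    rw [hη, hξ ⟨EReal.coe_le_coe_iff.1 hlc, EReal.coe_le_coe_iff.1 (hb ▸ min_le_right c a)⟩]

end Tau

/-- if `f ≥ 0` on `(0,a)` then the image of `ξ` under `τ` agrees with `η`
on `[0,a]`. -/
theorem tau_balances_on_interval (ξ η : Measure ℝ)
    [IsLocallyFiniteMeasure ξ] [IsLocallyFiniteMeasure η]
    (hξd : ∀ x : ℝ, ξ {x} = 0) (hηd : ∀ x : ℝ, η {x} = 0)
    (hsing : ξ.MutuallySingular η)
    (a : ℝ) (ha : 0 < a) (hf : ∀ t ∈ Set.Ioo 0 a, 0 ≤ fdiff ξ η t) :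
    ∀ C : Set ℝ, C ⊆ Set.Icc 0 a → MeasurableSet C →
      ξ {s : ℝ | ∃ t ∈ C, tauE ξ η s = (t : EReal)} = η C := by
  intro C hC hCm
  have : NullSingletonClass ξ := ⟨hξd⟩
  have : NullSingletonClass η := ⟨hηd⟩
  have hzero : fdiff ξ η 0 = 0 := by simp [fdiff, hξd, hηd]
  have hnonneg : Icc 0 a ⊆ {t | 0 ≤ fdiff ξ η t} := closure_Ioo ha.ne ▸
    closure_minimal hf (isClosed_le continuous_const (continuous_fdiff ξ η))
  have hmin : IsMinOn (fdiff ξ η) (Icc 0 a) 0 := fun t ht => hzero.trans_le (hnonneg ht)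
  have himage : Real.toEReal '' C ⊆ Icc ((0 : ℝ) : EReal) a := by
    rintro _ ⟨t, ht, rfl⟩
    exact ⟨EReal.coe_le_coe_iff.2 (hC ht).1, EReal.coe_le_coe_iff.2 (hC ht).2⟩
  have hemb := EReal.measurableEmbedding_coe
  have hCimage : MeasurableSet (Real.toEReal '' C) := hemb.measurableSet_image.2 hCm
  calc ξ {s | ∃ t ∈ C, tauE ξ η s = t} = ξ.map (tauE ξ η) (Real.toEReal '' C) := by
        rw [Measure.map_apply measurable_tauE hCimage]
        simp only [preimage, mem_image, eq_comm]
    _ = η.map Real.toEReal (Real.toEReal '' C) := by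
        rw [← Measure.restrict_eq_self _ himage, map_tauE_restrict_Icc hsing ha.le hmin,
          Measure.restrict_eq_self _ himage]
    _ = η C := by rw [hemb.map_apply, preimage_image_eq C EReal.coe_injective]
end

section
/- Assume there is a σ-finite measure Q* on Ω that is invariant under every θ_t, satisfies Q*{ω : ξ(ω,(−∞,0)) < ∞} = Q*{ω : ξ(ω,(0,∞)) < ∞} = 0, and such that Q is the Palm measure of ξ with respect to Q*, i.e. Q(A) = ∫_Ω ∫_ℝ 1_{[0,1]}(s) 1_A(θ_s ω) ξ(ω, ds) Q*(dω) for every measurable A ⊆ Ω. Then for every r ∈ ℝ the image measure of Q under the map ω ↦ θ_{S_r(ω)}(ω) equals Q. -/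
open MeasureTheory ProbabilityTheory
open scoped ENNReal

/-- The generalised inverse `S_r` of the diffuse random measure `ξ`:
`S_r(ω) = sup {t ≥ 0 : ξ(ω,[0,t]) = r}` for `r ≥ 0` and
`S_r(ω) = sup {t < 0 : ξ(ω,[t,0]) = −r}` for `r < 0`. -/
noncomputable def Sr {Ω : Type*} [MeasurableSpace Ω] (ξ : Kernel Ω ℝ) (r : ℝ) (ω : Ω) : ℝ :=
  if 0 ≤ r then sSup {t : ℝ | 0 ≤ t ∧ ξ ω (Set.Icc 0 t) = ENNReal.ofReal r}
  else sSup {t : ℝ | t < 0 ∧ ξ ω (Set.Icc t 0) = ENNReal.ofReal (-r)}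

/-!
Transport each point `s` of the random measure `ξ ω` to `s + S_r (θ_s ω)`. Writing `F` for the
distribution function of `ξ ω` pinned at the origin and `G` for its right-continuous inverse, the
equivariance of `ξ` identifies the new position as `G (F s + r)`. As `ξ ω` is diffuse with infinite
mass at both ends, `F` maps `ξ ω` to Lebesgue measure and `G` maps Lebesgue measure back to `ξ ω`,
so the transport preserves `ξ ω`, and hence the Campbell measure `Q*(dω) ξ(ω, ds)` on `Ω × ℝ`.

The transport commutes with the diagonal action of the line on `Ω × ℝ`, which preserves the Campbell
measure. So the strip `Ω × (0, 1]` and its preimage under the transport are both fundamental domains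
for the diagonal action of `ℤ` and give the same mass to every invariant set. Applied to the sets
defined by `θ_s ω ∈ A`, this is the invariance of the Palm measure under `ω ↦ θ_{S_r ω} ω`.
-/

section SignedMass

open Filter Set

/-- The distribution function of `μ` pinned at the origin: `μ (0, t]` for `t ≥ 0` and `-μ (t, 0]`
for `t ≤ 0`. -/
noncomputable def signedMass (μ : Measure ℝ) (t : ℝ) : ℝ := ∫ _ in (0 : ℝ)..t, (1 : ℝ) ∂μ

/-- The right-continuous inverse of `signedMass μ`. The supremum is a junk value unless
`signedMass μ` is unbounded in both directions. -/
noncomputable def signedMassInv (μ : Measure ℝ) (y : ℝ) : ℝ := sSup {t | signedMass μ t ≤ y}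

/-- Infinite mass near both ends of the line, quantified over all half-lines so that it is visibly
translation invariant. -/
structure IsDoublyInfinite (μ : Measure ℝ) : Prop where
  Iio : ∀ a, μ (Iio a) = ⊤
  Ioi : ∀ a, μ (Ioi a) = ⊤

variable {μ : Measure ℝ}

lemma signedMass_eq_measureReal_sub (μ : Measure ℝ) (t : ℝ) :
    signedMass μ t = μ.real (Ioc 0 t) - μ.real (Ioc t 0) := by
  rw [signedMass, intervalIntegral.integral_const', smul_eq_mul, mul_one]

@[simp]
lemma signedMass_zero (μ : Measure ℝ) : signedMass μ 0 = 0 :=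
  intervalIntegral.integral_same

lemma IsDoublyInfinite.map_add_left (hμ : IsDoublyInfinite μ) (c : ℝ) :
    IsDoublyInfinite (μ.map (c + ·)) where
  Iio a := by
    rw [Measure.map_apply (measurable_const_add c) measurableSet_Iio, preimage_const_add_Iio,
      hμ.Iio]
  Ioi a := by
    rw [Measure.map_apply (measurable_const_add c) measurableSet_Ioi, preimage_const_add_Ioi,
      hμ.Ioi]

section LocallyFinite

variable [IsLocallyFiniteMeasure μ]

lemma isDoublyInfinite_iff : IsDoublyInfinite μ ↔ μ (Iio 0) = ⊤ ∧ μ (Ioi 0) = ⊤ := by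
  refine ⟨fun h ↦ ⟨h.Iio 0, h.Ioi 0⟩, fun ⟨hleft, hright⟩ ↦ ⟨fun a ↦ ?_, fun a ↦ ?_⟩⟩
  · have hcover : Iio 0 ⊆ Iio a ∪ Icc a 0 := fun x hx ↦
      (lt_or_ge x a).imp id fun hax ↦ ⟨hax, hx.le⟩
    have hsum := top_unique (hleft ▸ (measure_mono hcover).trans (measure_union_le _ _))
    exact (ENNReal.add_eq_top.1 hsum).resolve_right isCompact_Icc.measure_ne_top
  · have hcover : Ioi 0 ⊆ Ioi a ∪ Icc 0 a := fun x hx ↦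
      (lt_or_ge a x).imp id fun hxa ↦ ⟨hx.le, hxa⟩
    have hsum := top_unique (hright ▸ (measure_mono hcover).trans (measure_union_le _ _))
    exact (ENNReal.add_eq_top.1 hsum).resolve_right isCompact_Icc.measure_ne_top

lemma signedMass_sub_signedMass {a b : ℝ} (hab : a ≤ b) :
    signedMass μ b - signedMass μ a = μ.real (Ioc a b) := by
  rw [signedMass, signedMass, intervalIntegral.integral_interval_sub_left
    intervalIntegrable_const intervalIntegrable_const, intervalIntegral.integral_of_le hab,
    setIntegral_one_eq_measureReal]

lemma measure_Ioc_eq_ofReal_signedMass_sub {a b : ℝ} (hab : a ≤ b) :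
    μ (Ioc a b) = ENNReal.ofReal (signedMass μ b - signedMass μ a) := by
  rw [signedMass_sub_signedMass hab, ofReal_measureReal measure_Ioc_lt_top.ne]

lemma monotone_signedMass : Monotone (signedMass μ) := fun _ _ hab ↦
  sub_nonneg.1 ((signedMass_sub_signedMass (μ := μ) hab).symm ▸ measureReal_nonneg)

lemma signedMass_map_add_left (c x : ℝ) :
    signedMass (μ.map (c + ·)) x = signedMass μ (x - c) - signedMass μ (-c) := by
  have hIoc (a b : ℝ) : (μ.map (c + ·)).real (Ioc a b) = μ.real (Ioc (a - c) (b - c)) := by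
    rw [map_measureReal_apply (measurable_const_add c) measurableSet_Ioc, preimage_const_add_Ioc]
  rw [signedMass_eq_measureReal_sub, hIoc, hIoc, zero_sub, signedMass, signedMass,
    intervalIntegral.integral_interval_sub_left intervalIntegrable_const intervalIntegrable_const,
    intervalIntegral.integral_const', smul_eq_mul, mul_one]

lemma tendsto_signedMass_atBot (hμ : IsDoublyInfinite μ) :
    Tendsto (signedMass μ) atBot atBot := by
  have hIic : μ (Iic 0) = ⊤ := measure_mono_top Iio_subset_Iic_self (hμ.Iio 0)
  have hlim := hIic ▸ tendsto_measure_Ioc_atBot μ 0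
  rw [← tendsto_neg_atTop_iff, ← ENNReal.tendsto_ofReal_nhds_top]
  refine hlim.congr' ((eventually_le_atBot 0).mono fun t ht ↦ ?_)
  rw [measure_Ioc_eq_ofReal_signedMass_sub ht, signedMass_zero, zero_sub]

end LocallyFinite

section Diffuse

variable [IsLocallyFiniteMeasure μ] [NullSingletonClass μ]

lemma continuous_signedMass : Continuous (signedMass μ) :=
  intervalIntegral.continuous_primitive (fun _ _ ↦ intervalIntegrable_const) 0

lemma measure_Ico_eq_ofReal_signedMass_sub {a b : ℝ} (hab : a ≤ b) :
    μ (Ico a b) = ENNReal.ofReal (signedMass μ b - signedMass μ a) := by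
  rw [measure_congr Ico_ae_eq_Ioc, measure_Ioc_eq_ofReal_signedMass_sub hab]

lemma measure_Icc_eq_ofReal_signedMass_sub {a b : ℝ} (hab : a ≤ b) :
    μ (Icc a b) = ENNReal.ofReal (signedMass μ b - signedMass μ a) := by
  rw [← measure_congr Ioc_ae_eq_Icc, measure_Ioc_eq_ofReal_signedMass_sub hab]

lemma measure_Icc_zero_left_eq_ofReal_iff {r t : ℝ} (hr : 0 ≤ r) (ht : 0 ≤ t) :
    μ (Icc 0 t) = ENNReal.ofReal r ↔ signedMass μ t = r := by
  have hmass : 0 ≤ signedMass μ t := signedMass_zero μ ▸ monotone_signedMass ht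
  rw [measure_Icc_eq_ofReal_signedMass_sub ht, signedMass_zero, sub_zero,
    ENNReal.ofReal_eq_ofReal_iff hmass hr]

lemma measure_Icc_zero_right_eq_ofReal_neg_iff {r t : ℝ} (hr : r ≤ 0) (ht : t ≤ 0) :
    μ (Icc t 0) = ENNReal.ofReal (-r) ↔ signedMass μ t = r := by
  have hmass : signedMass μ t ≤ 0 := signedMass_zero μ ▸ monotone_signedMass ht
  rw [measure_Icc_eq_ofReal_signedMass_sub ht, signedMass_zero, zero_sub,
    ENNReal.ofReal_eq_ofReal_iff (neg_nonneg.2 hmass) (neg_nonneg.2 hr), neg_inj]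

lemma tendsto_signedMass_atTop (hμ : IsDoublyInfinite μ) :
    Tendsto (signedMass μ) atTop atTop := by
  have hIci : μ (Ici 0) = ⊤ := measure_mono_top Ioi_subset_Ici_self (hμ.Ioi 0)
  have hlim := hIci ▸ tendsto_measure_Ico_atTop μ 0
  rw [← ENNReal.tendsto_ofReal_nhds_top]
  refine hlim.congr' ((eventually_ge_atTop 0).mono fun t ht ↦ ?_)
  rw [measure_Ico_eq_ofReal_signedMass_sub ht, signedMass_zero, sub_zero]

lemma gc_signedMass_signedMassInv (hμ : IsDoublyInfinite μ) :
    GaloisConnection (signedMass μ) (signedMassInv μ) := by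
  intro x y
  have hbdd : BddAbove {t | signedMass μ t ≤ y} := by
    obtain ⟨b, hb⟩ := ((tendsto_signedMass_atTop hμ).eventually_gt_atTop y).exists
    exact ⟨b, fun t ht ↦ (monotone_signedMass.reflect_lt (ht.trans_lt hb)).le⟩
  refine ⟨fun hx ↦ le_csSup hbdd hx, fun hx ↦ (monotone_signedMass hx).trans ?_⟩
  have hne : {t | signedMass μ t ≤ y}.Nonempty :=
    ((tendsto_signedMass_atBot hμ).eventually_le_atBot y).exists
  exact (isClosed_le continuous_signedMass continuous_const).csSup_mem hne hbdd

lemma signedMass_signedMassInv (hμ : IsDoublyInfinite μ) (y : ℝ) :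
    signedMass μ (signedMassInv μ y) = y := by
  have hsurj := continuous_signedMass.surjective
    (tendsto_signedMass_atTop hμ) (tendsto_signedMass_atBot hμ)
  obtain ⟨t, rfl⟩ := hsurj y
  exact (gc_signedMass_signedMassInv hμ).l_u_l_eq_l t

lemma measurePreserving_signedMass (hμ : IsDoublyInfinite μ) :
    MeasurePreserving (signedMass μ) μ volume := by
  have gc := gc_signedMass_signedMassInv hμ
  refine ⟨continuous_signedMass.measurable, (Measure.ext_of_Ioc _ _ fun a b hab ↦ ?_).symm⟩
  have hpreimage :
      signedMass μ ⁻¹' Ioc a b = Ioc (signedMassInv μ a) (signedMassInv μ b) := by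
    ext x
    exact and_congr gc.lt_iff_lt (gc x b)
  rw [Measure.map_apply continuous_signedMass.measurable measurableSet_Ioc, hpreimage,
    measure_Ioc_eq_ofReal_signedMass_sub (gc.monotone_u hab.le),
    signedMass_signedMassInv hμ, signedMass_signedMassInv hμ, Real.volume_Ioc]

lemma measurePreserving_signedMassInv (hμ : IsDoublyInfinite μ) :
    MeasurePreserving (signedMassInv μ) volume μ := by
  have gc := gc_signedMass_signedMassInv hμ
  refine ⟨gc.monotone_u.measurable, (Measure.ext_of_Ico _ _ fun a b hab ↦ ?_).symm⟩
  have hpreimage : signedMassInv μ ⁻¹' Ico a b = Ico (signedMass μ a) (signedMass μ b) := by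
    ext y
    exact and_congr (gc a y).symm gc.lt_iff_lt.symm
  rw [Measure.map_apply gc.monotone_u.measurable measurableSet_Ico, hpreimage, Real.volume_Ico,
    measure_Ico_eq_ofReal_signedMass_sub hab.le]

lemma measurePreserving_signedMassInv_signedMass_add (hμ : IsDoublyInfinite μ) (r : ℝ) :
    MeasurePreserving (fun s ↦ signedMassInv μ (signedMass μ s + r)) μ μ :=
  (measurePreserving_signedMassInv hμ).comp
    ((measurePreserving_add_right volume r).comp (measurePreserving_signedMass hμ))

lemma isGreatest_signedMassInv (hμ : IsDoublyInfinite μ) (y : ℝ) :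
    IsGreatest {t | signedMass μ t = y} (signedMassInv μ y) :=
  ⟨signedMass_signedMassInv hμ y, fun _ ht ↦ (gc_signedMass_signedMassInv hμ).le_u ht.le⟩

lemma signedMassInv_map_add_left (hμ : IsDoublyInfinite μ) (c y : ℝ) :
    signedMassInv (μ.map (c + ·)) y = c + signedMassInv μ (signedMass μ (-c) + y) := by
  refine IsGreatest.csSup_eq ⟨?_, fun t ht ↦ ?_⟩
  · rw [mem_ofPred_eq, signedMass_map_add_left, add_sub_cancel_left, signedMass_signedMassInv hμ,
      add_sub_cancel_left]
  · rw [mem_ofPred_eq, signedMass_map_add_left, sub_le_iff_le_add'] at ht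
    exact sub_le_iff_le_add'.1 ((gc_signedMass_signedMassInv hμ).le_u ht)

end Diffuse

end SignedMass

section SFiniteKernel

variable {α β : Type*} [MeasurableSpace α] [MeasurableSpace β]

lemma isSFiniteKernel_of_forall_isFiniteMeasure (κ : Kernel α β) [∀ a, IsFiniteMeasure (κ a)] :
    IsSFiniteKernel κ := by
  classical
  let level (a : α) : ℕ := ⌊(κ a).real Set.univ⌋₊
  have hlevel : Measurable level :=
    Nat.measurable_floor.comp (κ.measurable_coe MeasurableSet.univ).ennreal_toReal
  have hlevelSet (n : ℕ) : MeasurableSet (level ⁻¹' {n}) := hlevel (measurableSet_singleton n)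
  have hsum : κ = Kernel.sum fun n ↦ Kernel.piecewise (hlevelSet n) κ 0 := by
    ext a s hs
    rw [Kernel.sum_apply' _ _ hs, tsum_eq_single (level a), Kernel.piecewise_apply,
      if_pos (by rfl)]
    intro n hn
    rw [Kernel.piecewise_apply, if_neg fun h ↦ hn h.symm]
    rfl
  have hfinite (n : ℕ) : IsFiniteKernel (Kernel.piecewise (hlevelSet n) κ 0) := by
    refine ⟨ENNReal.ofReal (n + 1), ENNReal.ofReal_lt_top, fun a ↦ ?_⟩
    rw [Kernel.piecewise_apply]
    split_ifs with ha
    · rw [← ofReal_measureReal, ← show level a = n from ha]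
      exact ENNReal.ofReal_le_ofReal (Nat.lt_floor_add_one _).le
    · exact zero_le
  exact hsum ▸ inferInstance

lemma isSFiniteKernel_of_forall_isLocallyFiniteMeasure [TopologicalSpace β] [T2Space β]
    [SigmaCompactSpace β] [OpensMeasurableSpace β] (κ : Kernel α β)
    [∀ a, IsLocallyFiniteMeasure (κ a)] : IsSFiniteKernel κ := by
  let piece : ℕ → Set β := disjointed (compactCovering β)
  have hpiece (n : ℕ) : MeasurableSet (piece n) :=
    .disjointed (fun i ↦ (isCompact_compactCovering β i).measurableSet) n
  have hsum : κ = Kernel.sum fun n ↦ κ.restrict (hpiece n) := by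
    ext1 a
    simp only [Kernel.sum_apply, Kernel.restrict_apply]
    rw [← Measure.restrict_iUnion (disjoint_disjointed _) hpiece, iUnion_disjointed,
      iUnion_compactCovering, Measure.restrict_univ]
  have hfinite (n : ℕ) : IsSFiniteKernel (κ.restrict (hpiece n)) := by
    have (a : α) : IsFiniteMeasure (κ.restrict (hpiece n) a) := by
      rw [Kernel.restrict_apply, isFiniteMeasure_restrict]
      exact measure_ne_top_of_subset (disjointed_subset _ n)
        (isCompact_compactCovering β n).measure_ne_top
    exact isSFiniteKernel_of_forall_isFiniteMeasure _
  exact hsum ▸ inferInstance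

end SFiniteKernel

section CampbellMeasure

variable {Ω S : Type*} [MeasurableSpace Ω] [MeasurableSpace S]

/-- The Campbell measure `P(dω) ξ(ω, ds)` of the random measure `ξ` under `P`. It is `P ⊗ₘ ξ` when
`P` is s-finite; written as a bind it is also meaningful for arbitrary `P`. -/
noncomputable def campbellMeasure (P : Measure Ω) (ξ : Kernel Ω S) : Measure (Ω × S) :=
  (Kernel.id ×ₖ ξ) ∘ₘ P

variable {P : Measure Ω} {ξ : Kernel Ω S} [IsSFiniteKernel ξ]

lemma campbellMeasure_apply {B : Set (Ω × S)} (hB : MeasurableSet B) :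
    campbellMeasure P ξ B = ∫⁻ ω, ξ ω (Prod.mk ω ⁻¹' B) ∂P := by
  rw [campbellMeasure, Measure.bind_apply hB (Kernel.id ×ₖ ξ).measurable.aemeasurable]
  exact lintegral_congr fun ω ↦ Kernel.id_prod_apply' ξ ω hB

lemma ae_fst_mem_campbellMeasure {A : Set Ω} (hA : MeasurableSet A) (hPA : ∀ᵐ ω ∂P, ω ∈ A) :
    ∀ᵐ p ∂campbellMeasure P ξ, p.1 ∈ A := by
  change campbellMeasure P ξ (Prod.fst ⁻¹' A)ᶜ = 0
  rw [campbellMeasure_apply (measurable_fst hA).compl]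
  refine lintegral_eq_zero_of_ae_eq_zero (hPA.mono fun ω hω ↦ ?_)
  simp only [Set.preimage_compl, Set.preimage_preimage, Set.preimage_const_of_mem hω,
    Set.compl_univ, measure_empty, Pi.zero_apply]

lemma measurePreserving_campbellMeasure_of_fiberwise {τ : Ω → S → S}
    (hτ : Measurable (Function.uncurry τ)) (hτξ : ∀ᵐ ω ∂P, MeasurePreserving (τ ω) (ξ ω) (ξ ω)) :
    MeasurePreserving (fun p : Ω × S ↦ (p.1, τ p.1 p.2))
      (campbellMeasure P ξ) (campbellMeasure P ξ) := by
  have hmeas : Measurable fun p : Ω × S ↦ (p.1, τ p.1 p.2) := measurable_fst.prodMk hτ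
  refine ⟨hmeas, Measure.ext fun B hB ↦ ?_⟩
  rw [Measure.map_apply hmeas hB, campbellMeasure_apply (hmeas hB), campbellMeasure_apply hB]
  refine lintegral_congr_ae (hτξ.mono fun ω hω ↦ ?_)
  exact hω.measure_preimage (measurable_prodMk_left hB).nullMeasurableSet

end CampbellMeasure

section Equivariance

variable {G Ω S : Type*} [MeasurableSpace Ω] [MeasurableSpace S]

/-- Equivariance of a random measure: translating the configuration `ω` by `g` translates `ξ ω`
by `g`. -/
def IsEquivariantKernel (G : Type*) [VAdd G Ω] [VAdd G S] (ξ : Kernel Ω S) : Prop :=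
  ∀ (g : G) (ω : Ω), ξ (g +ᵥ ω) = (ξ ω).map (g +ᵥ ·)

instance measurableConstVAdd_prod [VAdd G Ω] [VAdd G S] [MeasurableConstVAdd G Ω]
    [MeasurableConstVAdd G S] : MeasurableConstVAdd G (Ω × S) where
  measurable_const_vadd g := (measurable_fst.const_vadd g).prodMk (measurable_snd.const_vadd g)

lemma vaddInvariantMeasure_campbellMeasure [VAdd G Ω] [VAdd G S] [MeasurableConstVAdd G Ω]
    [MeasurableConstVAdd G S] {P : Measure Ω} [VAddInvariantMeasure G Ω P] {ξ : Kernel Ω S}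
    [IsSFiniteKernel ξ] (hξ : IsEquivariantKernel G ξ) :
    VAddInvariantMeasure G (Ω × S) (campbellMeasure P ξ) where
  measure_preimage_vadd g B hB := by
    rw [campbellMeasure_apply (measurable_const_vadd g hB), campbellMeasure_apply hB,
      ← (measurePreserving_vadd g P).lintegral_comp
        (Kernel.measurable_kernel_prodMk_left (κ := ξ) hB)]
    refine lintegral_congr fun ω ↦ ?_
    rw [hξ, Measure.map_apply (measurable_const_vadd g) (measurable_prodMk_left hB)]
    rfl

lemma vaddInvariantMeasure_zmultiples [AddGroup G] [AddAction G Ω] [MeasurableConstVAdd G Ω]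
    {P : Measure Ω} {g : G} (hg : MeasurePreserving (g +ᵥ ·) P P) :
    VAddInvariantMeasure (AddSubgroup.zmultiples g) Ω P := by
  have hpreserving (h : G) (hh : h ∈ AddSubgroup.zmultiples g) :
      MeasurePreserving (h +ᵥ · : Ω → Ω) P P := by
    rw [AddSubgroup.zmultiples_eq_closure] at hh
    induction hh using AddSubgroup.closure_induction with
    | mem x hx => exact Set.mem_singleton_iff.1 hx ▸ hg
    | zero =>
      rw [show ((0 : G) +ᵥ · : Ω → Ω) = id from funext (zero_vadd G)]
      exact .id P
    | add x y _ _ hx hy => simpa only [Function.comp_def, vadd_vadd] using hx.comp hy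
    | neg x _ hx => exact hx.symm (MeasurableEquiv.vadd x)
  exact ⟨fun h _ hs ↦ (hpreserving h h.2).measure_preimage hs.nullMeasurableSet⟩

end Equivariance

section Allocation

variable {G Ω : Type*} [AddGroup G] [AddAction G Ω]

/-- The configuration `ω` as seen by an observer at the site `s`, for `p = (ω, s)`. -/
def seenFrom (p : Ω × G) : Ω := (-p.2 : G) +ᵥ p.1

/-- The transport which sends each site to the site at displacement `S`, where `S` is evaluated at
the configuration seen from the site. -/
def allocation (S : Ω → G) (p : Ω × G) : Ω × G := (p.1, p.2 + S (seenFrom p))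

lemma seenFrom_vadd (g : G) (p : Ω × G) : seenFrom (g +ᵥ p) = seenFrom p := by
  simp [seenFrom, vadd_vadd]

lemma allocation_vadd (S : Ω → G) (g : G) (p : Ω × G) :
    allocation S (g +ᵥ p) = g +ᵥ allocation S p := by
  simp [allocation, seenFrom_vadd, add_assoc]

lemma seenFrom_allocation (S : Ω → G) (p : Ω × G) :
    seenFrom (allocation S p) = (-S (seenFrom p) : G) +ᵥ seenFrom p := by
  simp [allocation, seenFrom, vadd_vadd]

end Allocation

section PalmMeasure

variable {G Ω : Type*} [AddGroup G] [MeasurableSpace G] [AddAction G Ω] [MeasurableSpace Ω]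

/-- The Palm measure with respect to the Campbell measure `M` and the window `D`: the distribution
of the configuration seen from the points of the random measure in `D`. -/
noncomputable def palmMeasure (M : Measure (Ω × G)) (D : Set G) : Measure Ω :=
  (M.restrict (Prod.snd ⁻¹' D)).map seenFrom

variable {M : Measure (Ω × G)} {D : Set G}

lemma measure_inter_snd_preimage_eq_of_invariant [MeasurableAdd G] [MeasurableConstVAdd G Ω]
    {Γ : AddSubgroup G} [Countable Γ] [VAddInvariantMeasure Γ (Ω × G) M]
    (hD : IsAddFundamentalDomain Γ D M.snd) {S : Ω → G}
    (hS : MeasurePreserving (allocation S) M M) {B : Set (Ω × G)} (hB : MeasurableSet B)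
    (hBinv : ∀ g : Γ, (g +ᵥ ·) ⁻¹' B = B) :
    M (B ∩ Prod.snd ⁻¹' D) = M (B ∩ allocation S ⁻¹' (Prod.snd ⁻¹' D)) := by
  have hsnd : Measure.QuasiMeasurePreserving Prod.snd M M.snd :=
    ⟨measurable_snd, Measure.AbsolutelyContinuous.rfl⟩
  have hstrip : IsAddFundamentalDomain Γ (Prod.snd ⁻¹' D) M :=
    hD.preimage_of_equiv hsnd Function.bijective_id fun _ _ ↦ rfl
  have hpreimage : IsAddFundamentalDomain Γ (allocation S ⁻¹' (Prod.snd ⁻¹' D)) M :=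
    hstrip.preimage_of_equiv hS.quasiMeasurePreserving Function.bijective_id fun g ↦
      allocation_vadd S g.1
  exact hstrip.measure_set_eq hpreimage hB hBinv

variable [MeasurableNeg G] [MeasurableVAdd₂ G Ω]

lemma measurable_seenFrom : Measurable (seenFrom : Ω × G → Ω) :=
  measurable_snd.neg.vadd measurable_fst

lemma palmMeasure_apply {A : Set Ω} (hA : MeasurableSet A) :
    palmMeasure M D A = M (seenFrom ⁻¹' A ∩ Prod.snd ⁻¹' D) := by
  rw [palmMeasure, Measure.map_apply measurable_seenFrom hA,
    Measure.restrict_apply (measurable_seenFrom hA)]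

lemma ae_palmMeasure_of_ae {A : Set Ω} (hA : MeasurableSet A)
    (hM : ∀ᵐ p ∂M, seenFrom p ∈ A) : ∀ᵐ ω ∂palmMeasure M D, ω ∈ A :=
  (ae_map_iff measurable_seenFrom.aemeasurable hA).2 (ae_restrict_of_ae hM)

theorem map_neg_vadd_palmMeasure [MeasurableAdd G] {Γ : AddSubgroup G} [Countable Γ]
    [VAddInvariantMeasure Γ (Ω × G) M] (hDm : MeasurableSet D)
    (hD : IsAddFundamentalDomain Γ D M.snd) {S : Ω → G} (hSm : Measurable S)
    (hS : MeasurePreserving (allocation S) M M) :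
    (palmMeasure M D).map (fun ω ↦ -S ω +ᵥ ω) = palmMeasure M D := by
  have hshift : Measurable fun ω ↦ -S ω +ᵥ ω := hSm.neg.vadd measurable_id
  ext A hA
  have hB : MeasurableSet (seenFrom ⁻¹' A : Set (Ω × G)) := measurable_seenFrom hA
  have hinv (g : Γ) :
      (g +ᵥ ·) ⁻¹' (allocation S ⁻¹' (seenFrom ⁻¹' A)) = allocation S ⁻¹' (seenFrom ⁻¹' A) := by
    ext p
    simp only [Set.mem_preimage, AddSubgroup.vadd_def, allocation_vadd, seenFrom_vadd]
  calc (palmMeasure M D).map (fun ω ↦ -S ω +ᵥ ω) A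
      = M (allocation S ⁻¹' (seenFrom ⁻¹' A) ∩ Prod.snd ⁻¹' D) := by
        rw [Measure.map_apply hshift hA, palmMeasure_apply (hshift hA)]
        simp only [← Set.preimage_comp, Function.comp_def, seenFrom_allocation]
    _ = M (allocation S ⁻¹' (seenFrom ⁻¹' A ∩ Prod.snd ⁻¹' D)) :=
        measure_inter_snd_preimage_eq_of_invariant hD hS (hS.measurable hB) hinv
    _ = M (seenFrom ⁻¹' A ∩ Prod.snd ⁻¹' D) :=
        hS.measure_preimage (hB.inter (measurable_snd hDm)).nullMeasurableSet
    _ = palmMeasure M D A := (palmMeasure_apply hA).symm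

end PalmMeasure

section RandomMeasureOnLine

open Set

variable {Ω : Type*} [MeasurableSpace Ω] {ξ : Kernel Ω ℝ}

lemma measurable_signedMass_kernel (ξ : Kernel Ω ℝ) (t : ℝ) :
    Measurable fun ω ↦ signedMass (ξ ω) t := by
  simp only [signedMass_eq_measureReal_sub]
  exact (ξ.measurable_coe measurableSet_Ioc).ennreal_toReal.sub
    (ξ.measurable_coe measurableSet_Ioc).ennreal_toReal

lemma isDoublyInfinite_vadd [AddAction ℝ Ω] (hξ : IsEquivariantKernel ℝ ξ) (c : ℝ) {ω : Ω}
    (hω : IsDoublyInfinite (ξ ω)) : IsDoublyInfinite (ξ (c +ᵥ ω)) :=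
  hξ c ω ▸ hω.map_add_left c

lemma palmMeasure_campbellMeasure_Ioc_apply [AddAction ℝ Ω] [MeasurableVAdd₂ ℝ Ω] {P : Measure Ω}
    [IsSFiniteKernel ξ] [∀ ω, NullSingletonClass (ξ ω)] (a b : ℝ) {A : Set Ω}
    (hA : MeasurableSet A) :
    palmMeasure (campbellMeasure P ξ) (Ioc a b) A =
      ∫⁻ ω, ξ ω {s ∈ Icc a b | -s +ᵥ ω ∈ A} ∂P := by
  rw [palmMeasure_apply hA,
    campbellMeasure_apply ((measurable_seenFrom hA).inter (measurable_snd measurableSet_Ioc))]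
  refine lintegral_congr fun ω ↦ measure_congr ?_
  rw [preimage_inter, inter_comm]
  exact Ioc_ae_eq_Icc.inter Filter.EventuallyEq.rfl

variable [∀ ω, IsLocallyFiniteMeasure (ξ ω)]

lemma measurableSet_isDoublyInfinite : MeasurableSet {ω | IsDoublyInfinite (ξ ω)} := by
  simp only [isDoublyInfinite_iff]
  exact (ξ.measurable_coe measurableSet_Iio (measurableSet_singleton ⊤)).inter
    (ξ.measurable_coe measurableSet_Ioi (measurableSet_singleton ⊤))

variable [∀ ω, NullSingletonClass (ξ ω)]

lemma Sr_eq_signedMassInv (r : ℝ) {ω : Ω} (hω : IsDoublyInfinite (ξ ω)) :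
    Sr ξ r ω = signedMassInv (ξ ω) r := by
  obtain ⟨hmass, hmax⟩ := isGreatest_signedMassInv hω r
  rw [mem_ofPred_eq] at hmass
  rw [Sr]
  split_ifs with hr
  · have hnonneg : 0 ≤ signedMassInv (ξ ω) r :=
      (gc_signedMass_signedMassInv hω).le_u ((signedMass_zero _).trans_le hr)
    exact IsGreatest.csSup_eq
      ⟨⟨hnonneg, (measure_Icc_zero_left_eq_ofReal_iff hr hnonneg).2 hmass⟩,
        fun t ⟨ht, htr⟩ ↦ hmax ((measure_Icc_zero_left_eq_ofReal_iff hr ht).1 htr)⟩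
  · rw [not_le] at hr
    have hneg : signedMassInv (ξ ω) r < 0 :=
      monotone_signedMass.reflect_lt (hmass.trans_lt (hr.trans_eq (signedMass_zero (ξ ω)).symm))
    exact IsGreatest.csSup_eq
      ⟨⟨hneg, (measure_Icc_zero_right_eq_ofReal_neg_iff hr.le hneg.le).2 hmass⟩,
        fun t ⟨ht, htr⟩ ↦ hmax ((measure_Icc_zero_right_eq_ofReal_neg_iff hr.le ht.le).1 htr)⟩

/-- Off this set the supremum defining `Sr` may run over an empty or unbounded set. -/
lemma measurable_indicator_Sr (r : ℝ) :
    Measurable ({ω | IsDoublyInfinite (ξ ω)}.indicator (Sr ξ r)) := by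
  refine measurable_of_Ici fun t ↦ ?_
  have hlevel : Sr ξ r ⁻¹' Ici t ∩ {ω | IsDoublyInfinite (ξ ω)} =
      {ω | signedMass (ξ ω) t ≤ r} ∩ {ω | IsDoublyInfinite (ξ ω)} := by
    ext ω
    refine and_congr_left fun hω : IsDoublyInfinite (ξ ω) ↦ ?_
    rw [mem_preimage, mem_Ici, Sr_eq_signedMassInv r hω]
    exact (gc_signedMass_signedMassInv hω t r).symm
  rw [indicator_preimage, Set.ite, hlevel]
  exact ((measurable_signedMass_kernel ξ t measurableSet_Iic).inter
    measurableSet_isDoublyInfinite).union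
      (.diff (measurable_zero measurableSet_Ici) measurableSet_isDoublyInfinite)

variable [AddAction ℝ Ω]

lemma add_Sr_seenFrom (hξ : IsEquivariantKernel ℝ ξ) (r s : ℝ) {ω : Ω}
    (hω : IsDoublyInfinite (ξ ω)) :
    s + Sr ξ r (seenFrom (ω, s)) = signedMassInv (ξ ω) (signedMass (ξ ω) s + r) := by
  have hmap : ξ (-s +ᵥ ω) = (ξ ω).map (-s + ·) := hξ (-s) ω
  rw [seenFrom, Sr_eq_signedMassInv r (isDoublyInfinite_vadd hξ (-s) hω), hmap,
    signedMassInv_map_add_left hω, neg_neg, add_neg_cancel_left]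

variable [MeasurableVAdd₂ ℝ Ω] {P : Measure Ω}

lemma measurePreserving_allocation_indicator_Sr [IsSFiniteKernel ξ] (hξ : IsEquivariantKernel ℝ ξ)
    (hinf : ∀ᵐ ω ∂P, IsDoublyInfinite (ξ ω)) (r : ℝ) :
    MeasurePreserving (allocation ({ω | IsDoublyInfinite (ξ ω)}.indicator (Sr ξ r)))
      (campbellMeasure P ξ) (campbellMeasure P ξ) := by
  refine measurePreserving_campbellMeasure_of_fiberwise
    (τ := fun ω s ↦ (allocation ({ω | IsDoublyInfinite (ξ ω)}.indicator (Sr ξ r)) (ω, s)).2)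
    (measurable_snd.add ((measurable_indicator_Sr r).comp measurable_seenFrom))
    (hinf.mono fun ω hω ↦ ?_)
  have hfiber (s : ℝ) : (allocation ({ω | IsDoublyInfinite (ξ ω)}.indicator (Sr ξ r)) (ω, s)).2 =
      signedMassInv (ξ ω) (signedMass (ξ ω) s + r) := by
    have hseen : seenFrom (ω, s) ∈ {ω | IsDoublyInfinite (ξ ω)} :=
      isDoublyInfinite_vadd hξ (-s) hω
    rw [← add_Sr_seenFrom hξ r s hω, allocation, indicator_of_mem hseen]
  simpa only [hfiber] using measurePreserving_signedMassInv_signedMass_add hω r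

theorem map_neg_Sr_vadd_palmMeasure [VAddInvariantMeasure (AddSubgroup.zmultiples (1 : ℝ)) Ω P]
    (hξ : IsEquivariantKernel ℝ ξ) (hinf : ∀ᵐ ω ∂P, IsDoublyInfinite (ξ ω)) (r : ℝ) :
    (palmMeasure (campbellMeasure P ξ) (Ioc 0 1)).map (fun ω ↦ -Sr ξ r ω +ᵥ ω) =
      palmMeasure (campbellMeasure P ξ) (Ioc 0 1) := by
  have := isSFiniteKernel_of_forall_isLocallyFiniteMeasure ξ
  have : VAddInvariantMeasure (AddSubgroup.zmultiples (1 : ℝ)) (Ω × ℝ) (campbellMeasure P ξ) :=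
    vaddInvariantMeasure_campbellMeasure fun g ω ↦ hξ g ω
  have hpalm : ∀ᵐ ω ∂palmMeasure (campbellMeasure P ξ) (Ioc 0 1),
      ω ∈ {ω | IsDoublyInfinite (ξ ω)} :=
    ae_palmMeasure_of_ae measurableSet_isDoublyInfinite <|
      (ae_fst_mem_campbellMeasure measurableSet_isDoublyInfinite hinf).mono fun p hp ↦
        isDoublyInfinite_vadd hξ (-p.2) hp
  have hindicator : (fun ω ↦ -Sr ξ r ω +ᵥ ω) =ᵐ[palmMeasure (campbellMeasure P ξ) (Ioc 0 1)]
      fun ω ↦ -{ω | IsDoublyInfinite (ξ ω)}.indicator (Sr ξ r) ω +ᵥ ω :=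
    hpalm.mono fun ω hω ↦
      congrArg (fun s : ℝ ↦ -s +ᵥ ω) (indicator_of_mem hω (Sr ξ r)).symm
  have hdomain := isAddFundamentalDomain_Ioc zero_lt_one 0 (campbellMeasure P ξ).snd
  rw [zero_add] at hdomain
  rw [Measure.map_congr hindicator]
  exact map_neg_vadd_palmMeasure measurableSet_Ioc hdomain (measurable_indicator_Sr r)
    (measurePreserving_allocation_indicator_Sr hξ hinf r)

end RandomMeasureOnLine

section Flow

variable {Ω : Type*}

/-- The action of the line attached to a flow. The sign makes `t +ᵥ ω` the configuration `ω`
translated by `t`, whereas `θ t ω` is the configuration seen from `t`. -/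
abbrev addActionOfFlow (θ : ℝ → Ω → Ω) (hθ0 : θ 0 = id)
    (hθadd : ∀ s t : ℝ, θ (s + t) = θ s ∘ θ t) : AddAction ℝ Ω where
  vadd t ω := θ (-t) ω
  zero_vadd ω := by
    change θ (-0) ω = ω
    rw [neg_zero, hθ0, id]
  add_vadd s t ω := by
    change θ (-(s + t)) ω = θ (-s) (θ (-t) ω)
    rw [neg_add, hθadd, Function.comp_apply]

lemma isEquivariantKernel_of_flow [MeasurableSpace Ω] (θ : ℝ → Ω → Ω) (hθ0 : θ 0 = id)
    (hθadd : ∀ s t : ℝ, θ (s + t) = θ s ∘ θ t) {ξ : Kernel Ω ℝ}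
    (hequiv : ∀ (t : ℝ) (C : Set ℝ), MeasurableSet C →
      ∀ ω : Ω, ξ (θ t ω) {x : ℝ | x + t ∈ C} = ξ ω C) :
    letI := addActionOfFlow θ hθ0 hθadd
    IsEquivariantKernel ℝ ξ := by
  intro c ω
  ext B hB
  have hC : MeasurableSet ((c + ·) ⁻¹' B) := measurable_const_add c hB
  have hshift : {x : ℝ | x + -c ∈ (c + ·) ⁻¹' B} = B := by
    ext x
    simp
  calc ξ (θ (-c) ω) B = ξ (θ (-c) ω) {x : ℝ | x + -c ∈ (c + ·) ⁻¹' B} := by rw [hshift]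
    _ = ξ ω ((c + ·) ⁻¹' B) := hequiv (-c) _ hC ω
    _ = (ξ ω).map (c + ·) B := (Measure.map_apply (measurable_const_add c) hB).symm

end Flow

theorem palm_implies_mass_stationary_general {Ω : Type*} [MeasurableSpace Ω]
    (θ : ℝ → Ω → Ω) (hθm : Measurable fun p : ℝ × Ω => θ p.1 p.2)
    (hθ0 : θ 0 = id) (hθadd : ∀ s t : ℝ, θ (s + t) = θ s ∘ θ t)
    (ξ : Kernel Ω ℝ)
    (hdiffuse : ∀ (ω : Ω) (x : ℝ), ξ ω {x} = 0)
    (hlf : ∀ (ω : Ω) (K : Set ℝ), IsCompact K → ξ ω K < ⊤)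
    (hequiv : ∀ (t : ℝ) (C : Set ℝ), MeasurableSet C →
      ∀ ω : Ω, ξ (θ t ω) {x : ℝ | x + t ∈ C} = ξ ω C)
    (Q Qstar : Measure Ω)
    (hQstarInv : Measure.map (θ 1) Qstar = Qstar)
    (hQstarLeft : Qstar {ω | ξ ω (Set.Iio 0) < ⊤} = 0)
    (hQstarRight : Qstar {ω | ξ ω (Set.Ioi 0) < ⊤} = 0)
    (hPalm : ∀ A : Set Ω, MeasurableSet A →
      Q A = ∫⁻ ω, ξ ω {s ∈ Set.Icc (0 : ℝ) 1 | θ s ω ∈ A} ∂Qstar)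
    (r : ℝ) :
    Measure.map (fun ω => θ (Sr ξ r ω) ω) Q = Q := by
  let := addActionOfFlow θ hθ0 hθadd
  have hneg_vadd (s : ℝ) (ω : Ω) : -s +ᵥ ω = θ s ω := congrArg (θ · ω) (neg_neg s)
  have : MeasurableVAdd₂ ℝ Ω := ⟨hθm.comp (measurable_fst.neg.prodMk measurable_snd)⟩
  have (ω : Ω) : IsFiniteMeasureOnCompacts (ξ ω) := ⟨hlf ω⟩
  have (ω : Ω) : NullSingletonClass (ξ ω) := ⟨hdiffuse ω⟩
  have := isSFiniteKernel_of_forall_isLocallyFiniteMeasure ξ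
  have hinv : MeasurePreserving ((-1 : ℝ) +ᵥ · : Ω → Ω) Qstar Qstar :=
    ⟨measurable_const_vadd _, by simpa only [hneg_vadd] using hQstarInv⟩
  have : VAddInvariantMeasure (AddSubgroup.zmultiples (1 : ℝ)) Ω Qstar :=
    AddSubgroup.zmultiples_neg (g := (1 : ℝ)) ▸ vaddInvariantMeasure_zmultiples hinv
  have hinf : ∀ᵐ ω ∂Qstar, IsDoublyInfinite (ξ ω) := by
    filter_upwards [measure_eq_zero_iff_ae_notMem.1 hQstarLeft,
      measure_eq_zero_iff_ae_notMem.1 hQstarRight] with ω hleft hright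
    exact isDoublyInfinite_iff.2 ⟨not_lt_top_iff.1 hleft, not_lt_top_iff.1 hright⟩
  have hQ : Q = palmMeasure (campbellMeasure Qstar ξ) (Set.Ioc 0 1) := by
    ext A hA
    simp only [hPalm A hA, palmMeasure_campbellMeasure_Ioc_apply 0 1 hA, hneg_vadd]
  simpa only [hneg_vadd, ← hQ] using map_neg_Sr_vadd_palmMeasure
    (isEquivariantKernel_of_flow θ hθ0 hθadd hequiv) hinf r

/-- if `Q` is the Palm measure of `ξ` with respect to a stationary σ-finite
measure `Q*`, then the image of `Q` under `ω ↦ θ_{S_r(ω)}(ω)` equals `Q` for every `r`. -/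
theorem palm_implies_mass_stationary {Ω : Type*} [MeasurableSpace Ω]
    (θ : ℝ → Ω → Ω) (hθm : Measurable fun p : ℝ × Ω => θ p.1 p.2)
    (hθ0 : θ 0 = id) (hθadd : ∀ s t : ℝ, θ (s + t) = θ s ∘ θ t)
    (ξ : Kernel Ω ℝ)
    (hdiffuse : ∀ (ω : Ω) (x : ℝ), ξ ω {x} = 0)
    (hlf : ∀ (ω : Ω) (K : Set ℝ), IsCompact K → ξ ω K < ⊤)
    (hequiv : ∀ (t : ℝ) (C : Set ℝ), MeasurableSet C →
      ∀ ω : Ω, ξ (θ t ω) {x : ℝ | x + t ∈ C} = ξ ω C)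
    (Q : Measure Ω) [SigmaFinite Q]
    (hQleft : Q {ω | ξ ω (Set.Iio 0) < ⊤} = 0)
    (hQright : Q {ω | ξ ω (Set.Ioi 0) < ⊤} = 0)
    (Qstar : Measure Ω) [SigmaFinite Qstar]
    (hQstarInv : ∀ t : ℝ, Measure.map (θ t) Qstar = Qstar)
    (hQstarLeft : Qstar {ω | ξ ω (Set.Iio 0) < ⊤} = 0)
    (hQstarRight : Qstar {ω | ξ ω (Set.Ioi 0) < ⊤} = 0)
    (hPalm : ∀ A : Set Ω, MeasurableSet A →
      Q A = ∫⁻ ω, ξ ω {s ∈ Set.Icc (0 : ℝ) 1 | θ s ω ∈ A} ∂Qstar) :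
    ∀ r : ℝ, Measure.map (fun ω => θ (Sr ξ r ω) ω) Q = Q :=
  palm_implies_mass_stationary_general θ hθm hθ0 hθadd ξ hdiffuse hlf hequiv Q Qstar (hQstarInv 1)
    hQstarLeft hQstarRight hPalm
end
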